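/- Let k ∈ ℤ, k ≠ −2. On the slit plane Ω = {r e^{iθ} : r > 0, 0 < θ < 2π} with the branch of logarithm log z = log r + iθ and z^w := exp(w·log z), define the holomorphic functions Z(z) = (2/(k+2))·z^{(k+2)/2} and W(z) = −(2i/(k+2))·z^{(k+2)/2}·(log z − 2/(k+2)). Then Z'(z) = z^{k/2}, W'(z) = −i·z^{k/2}·log z, and the function (d/dz)(W'(z)/Z'(z)) · Z'(z)² equals −i·z^{k−1} on Ω. Consequently the associated holomorphic cubic form Ξ = (1/4)(d²W/dZ²) dZ³ equals −(i/4)·z^{k−1} dz³. -/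

import Mathlib

open Complex Set

/-- The plane slit along the nonnegative real axis `Ω = {r e^{iθ} : r > 0, 0 < θ < 2π}`. -/
def SlitΩ : Set ℂ := {z : ℂ | z.im ≠ 0 ∨ z.re < 0}

/-- The branch of the logarithm with `log z = log r + iθ`, `θ ∈ (0, 2π)`. -/
noncomputable def slitLog (z : ℂ) : ℂ := Complex.log (-z) + Real.pi * Complex.I

/-- The power `z^w := exp(w · log z)` for this branch. -/
noncomputable def slitPow (z w : ℂ) : ℂ := Complex.exp (w * slitLog z)

/-- `Z(z) = (2/(k+2)) z^{(k+2)/2}`. -/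
noncomputable def Zcoord (k : ℤ) (z : ℂ) : ℂ :=
  (2 / ((k : ℂ) + 2)) * slitPow z (((k : ℂ) + 2) / 2)

/-- `W(z) = −(2i/(k+2)) z^{(k+2)/2} (log z − 2/(k+2))`. -/
noncomputable def Wcoord (k : ℤ) (z : ℂ) : ℂ :=
  -(2 * Complex.I / ((k : ℂ) + 2)) * slitPow z (((k : ℂ) + 2) / 2)
    * (slitLog z - 2 / ((k : ℂ) + 2))

/-!
With `a = (k + 2) / 2`, the coordinates are `Z = z ^ a / a` and
`W = -i (z ^ a / a) (log z - 1 / a)`, the latter being `-i ∫ z ^ (a - 1) log z` integrated by parts.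
Their derivatives have quotient `-i log z`, so differentiating once more gives `-i / z`, and the
factor `Z' ^ 2 = z ^ k` turns this into `-i z ^ (k - 1)`.
-/

theorem neg_mem_slitPlane_iff {z : ℂ} : -z ∈ slitPlane ↔ z ∈ SlitΩ := by
  simp [slitPlane, SlitΩ, or_comm]

theorem ne_zero_of_mem_slitΩ {z : ℂ} (hz : z ∈ SlitΩ) : z ≠ 0 :=
  neg_ne_zero.mp (slitPlane_ne_zero (neg_mem_slitPlane_iff.mpr hz))

theorem exp_slitLog {z : ℂ} (hz : z ≠ 0) : exp (slitLog z) = z := by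
  rw [slitLog, exp_add, exp_log (neg_ne_zero.mpr hz), exp_pi_mul_I, mul_neg_one, neg_neg]

theorem slitPow_ne_zero (z a : ℂ) : slitPow z a ≠ 0 :=
  exp_ne_zero _

theorem slitPow_add (z a b : ℂ) : slitPow z (a + b) = slitPow z a * slitPow z b := by
  rw [slitPow, add_mul, exp_add, slitPow, slitPow]

theorem slitPow_intCast {z : ℂ} (hz : z ≠ 0) (n : ℤ) : slitPow z n = z ^ n := by
  rw [slitPow, exp_int_mul, exp_slitLog hz]

theorem slitPow_sub_one {z : ℂ} (hz : z ≠ 0) (a : ℂ) : slitPow z (a - 1) = slitPow z a * z⁻¹ := by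
  have slitPow_neg_one : slitPow z (-1) = z⁻¹ := by
    rw [slitPow, neg_one_mul, exp_neg, exp_slitLog hz]
  rw [sub_eq_add_neg, slitPow_add, slitPow_neg_one]

theorem hasDerivAt_slitLog {z : ℂ} (hz : z ∈ SlitΩ) : HasDerivAt slitLog z⁻¹ z := by
  have hlog := (hasDerivAt_neg z).clog (neg_mem_slitPlane_iff.mpr hz)
  exact (hlog.add_const (Real.pi * I)).congr_deriv (by rw [neg_div_neg_eq, one_div])

theorem hasDerivAt_slitPow {z : ℂ} (hz : z ∈ SlitΩ) (a : ℂ) :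
    HasDerivAt (fun w => slitPow w a) (a * slitPow z (a - 1)) z := by
  refine ((hasDerivAt_slitLog hz).const_mul a).cexp.congr_deriv ?_
  rw [slitPow_sub_one (ne_zero_of_mem_slitΩ hz), slitPow, mul_left_comm]

theorem hasDerivAt_inv_mul_slitPow {z : ℂ} (hz : z ∈ SlitΩ) {a : ℂ} (ha : a ≠ 0) :
    HasDerivAt (fun w => a⁻¹ * slitPow w a) (slitPow z (a - 1)) z := by
  simpa only [inv_mul_cancel_left₀ ha] using (hasDerivAt_slitPow hz a).const_mul a⁻¹

theorem hasDerivAt_inv_mul_slitPow_mul_slitLog_sub_inv {z : ℂ} (hz : z ∈ SlitΩ) {a : ℂ}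
    (ha : a ≠ 0) :
    HasDerivAt (fun w => a⁻¹ * slitPow w a * (slitLog w - a⁻¹)) (slitPow z (a - 1) * slitLog z)
      z := by
  refine ((hasDerivAt_inv_mul_slitPow hz ha).mul
    ((hasDerivAt_slitLog hz).sub_const a⁻¹)).congr_deriv ?_
  rw [slitPow_sub_one (ne_zero_of_mem_slitΩ hz)]
  ring

theorem hasDerivAt_mul_slitLog_div_slitPow {z : ℂ} (hz : z ∈ SlitΩ) (c a : ℂ) :
    HasDerivAt (fun w => c * slitPow w a * slitLog w / slitPow w a) (c * z⁻¹) z := by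
  have quotient_eq : (fun w => c * slitPow w a * slitLog w / slitPow w a) =
      fun w => c * slitLog w :=
    funext fun w => by rw [mul_right_comm, mul_div_cancel_right₀ _ (slitPow_ne_zero w a)]
  exact quotient_eq ▸ (hasDerivAt_slitLog hz).const_mul c

theorem stmt9_general (k : ℂ) (hk : k ≠ -2) :
    ∀ z ∈ SlitΩ,
      HasDerivAt (fun w => 2 / (k + 2) * slitPow w ((k + 2) / 2)) (slitPow z (k / 2)) z ∧
      HasDerivAt
        (fun w => -(2 * I / (k + 2)) * slitPow w ((k + 2) / 2) * (slitLog w - 2 / (k + 2)))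
        (-I * slitPow z (k / 2) * slitLog z) z ∧
      ∃ d : ℂ,
        HasDerivAt (fun w => (-I * slitPow w (k / 2) * slitLog w) / slitPow w (k / 2)) d z ∧
        d * slitPow z (k / 2) ^ 2 = -I * slitPow z (k - 1) := by
  intro z hz
  have exponent_ne_zero : (k + 2) / 2 ≠ 0 :=
    div_ne_zero (fun h => hk (eq_neg_of_add_eq_zero_left h)) two_ne_zero
  have exponent_sub_one : (k + 2) / 2 - 1 = k / 2 := by ring
  have hZ := hasDerivAt_inv_mul_slitPow hz exponent_ne_zero
  have hW := (hasDerivAt_inv_mul_slitPow_mul_slitLog_sub_inv hz exponent_ne_zero).const_mul (-I)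
  rw [inv_div, exponent_sub_one] at hZ hW
  refine ⟨hZ, ?_, -I * z⁻¹, hasDerivAt_mul_slitLog_div_slitPow hz (-I) (k / 2), ?_⟩
  · exact (hW.congr_deriv (by ring)).congr_of_eventuallyEq (.of_forall fun w => by ring)
  · rw [sq, ← slitPow_add, add_halves, slitPow_sub_one (ne_zero_of_mem_slitΩ hz)]
    ring

theorem stmt9 (k : ℤ) (hk : k ≠ -2) :
    ∀ z ∈ SlitΩ,
      HasDerivAt (Zcoord k) (slitPow z ((k : ℂ) / 2)) z ∧
      HasDerivAt (Wcoord k) (-Complex.I * slitPow z ((k : ℂ) / 2) * slitLog z) z ∧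
      ∃ d : ℂ,
        HasDerivAt
          (fun w => (-Complex.I * slitPow w ((k : ℂ) / 2) * slitLog w) / slitPow w ((k : ℂ) / 2))
          d z ∧
        d * (slitPow z ((k : ℂ) / 2)) ^ 2 = -Complex.I * z ^ (k - 1) := by
  intro z hz
  rw [← slitPow_intCast (ne_zero_of_mem_slitΩ hz), Int.cast_sub, Int.cast_one]
  exact stmt9_general k (mod_cast hk) z hz
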